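/- Failure of the necessitation rule in the RNmatrix semantics: for any propositional variable p, although every valuation v ∈ F_K designates p→p, there exists a valuation v ∈ F_K such that v1(⊖(p→p)) = 0; hence the rule 'from A infer ⊖A' does not preserve validity over F_K. -/

import Mathlib

/-- Formulas of the modal language: propositional variables, negation,
the modality ⊖ (here `box`), and implication. -/
inductive Form : Type
  | var : ℕ → Form
  | neg : Form → Form
  | box : Form → Form
  | imp : Form → Form → Form

/-- A valuation `v = (v1, v2)` over the 4-valued Nmatrix for the minimal modal
logic M: `v1` behaves classically on ¬ and →, and `v1(⊖A) = v2(A)`;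
`v2` is otherwise unconstrained. -/
structure Val where
  v1 : Form → Fin 2
  v2 : Form → Fin 2
  neg_eq : ∀ A, v1 (Form.neg A) = 1 - v1 A
  imp_eq : ∀ A B, v1 (Form.imp A B) = max (1 - v1 A) (v1 B)
  box_eq : ∀ A, v1 (Form.box A) = v2 A

/-- The restriction defining F_K: valuations satisfying the (K) condition. -/
def FK (v : Val) : Prop :=
  ∀ A B : Form, v.v2 (A.imp B) ≤ max (1 - v.v2 A) (v.v2 B)

theorem max_one_sub_self_fin_two : ∀ x : Fin 2, max (1 - x) x = 1 := by
  decide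

/-- The classical truth value of a formula when the variables are valued by `e` and each formula
`⊖A` is valued by `w A`. It is the first component of the valuation `Val.ofAssignment e w`. -/
def Form.eval (e : ℕ → Fin 2) (w : Form → Fin 2) : Form → Fin 2
  | var n => e n
  | neg A => 1 - A.eval e w
  | box A => w A
  | imp A B => max (1 - A.eval e w) (B.eval e w)

namespace Val

/-- The valuation with `v1 = e` on variables and `v2 = w` on all formulas. The function `w` is
arbitrary, since valuations of the Nmatrix do not restrict the second component. -/
def ofAssignment (e : ℕ → Fin 2) (w : Form → Fin 2) : Val where
  v1 := Form.eval e w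
  v2 := w
  neg_eq _ := rfl
  imp_eq _ _ := rfl
  box_eq _ := rfl

theorem v1_imp_self (v : Val) (A : Form) : v.v1 (A.imp A) = 1 := by
  rw [v.imp_eq, max_one_sub_self_fin_two]

theorem fk_of_v2_eq_const {v : Val} {c : Fin 2} (hv : ∀ A, v.v2 A = c) : FK v := fun A B => by
  rw [hv (A.imp B), hv B]
  exact le_max_right _ _

end Val

theorem necessitation_fails_general :
    (∀ (v : Val) (A : Form), v.v1 (A.imp A) = 1) ∧
    (∃ v : Val, FK v ∧ ∀ A : Form, v.v1 A.box = 0) :=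
  ⟨Val.v1_imp_self, Val.ofAssignment (fun _ => 0) fun _ => 0,
    Val.fk_of_v2_eq_const fun _ => rfl, fun A => Val.box_eq _ A⟩

/-- Failure of the necessitation rule over F_K: p→p is designated by every
valuation in F_K, yet some valuation in F_K fails to designate ⊖(p→p). -/
theorem necessitation_fails (p : ℕ) :
    (∀ v : Val, FK v → v.v1 ((Form.var p).imp (Form.var p)) = 1) ∧
    (∃ v : Val, FK v ∧ v.v1 (Form.box ((Form.var p).imp (Form.var p))) = 0) := by
  obtain ⟨imp_self, v, hv, box_eq_zero⟩ := necessitation_fails_general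
  exact ⟨fun v _ => imp_self v _, v, hv, box_eq_zero _⟩
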